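/- arXiv:1510.09043 — 3 statements merged into one kernel-verified Lean document; each statement's English description precedes it below -/
import Mathlib

section
/- Let X = Spec(B) be given by a local presentation attached to the multiplicity as in the context, with elimination algebra G_X^{(d)} and closed point ξ. Then for every arc φ in X through ξ: (1) r_{X,φ}/ord(φ) ≥ ρ_{X,φ}/ord(φ), and (2) ρ_{X,φ}/ord(φ) ≥ ⌊ord(G_X^{(d)})⌋. -/
open Polynomial
open scoped ENNReal

noncomputable section

namespace NashMult

/-- The `m`-adic order `ν(f)` of an element `f` of a ring: the largest `n` with `f ∈ m ^ n`. -/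
def adicOrder {R : Type*} [CommRing R] (m : Ideal R) (f : R) : ℕ :=
  sSup {n : ℕ | f ∈ m ^ n}

/-- A subalgebra `G ⊆ R[W]` is *graded* if it is spanned by its "monomials", i.e. it is closed
under taking homogeneous components.  This is the condition expressing that `G = ⊕ I_l W^l`
for a family of ideals `I_l` (with `I_0 = R` and `I_i · I_j ⊆ I_{i+j}` automatic). -/
def Graded {R : Type*} [CommRing R] (G : Subalgebra R (Polynomial R)) : Prop :=
  ∀ p ∈ G, ∀ n : ℕ, (C (p.coeff n) * X ^ n : Polynomial R) ∈ G

/-- A *Rees algebra* over `R`: a finitely generated graded subalgebra of `R[W]`. -/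
def IsReesAlgebra {R : Type*} [CommRing R] (G : Subalgebra R (Polynomial R)) : Prop :=
  G.FG ∧ Graded G

/-- The order of (the Rees algebra) `G` at the closed point of the local ring `(R, m)`:
`ord(G) = inf { ν(f)/n : f W^n a homogeneous element of G, n ≥ 1, f ≠ 0 }`
(with value `∞` for the empty infimum). -/
def reesOrder {R : Type*} [CommRing R] (m : Ideal R) (G : Subalgebra R (Polynomial R)) : ℝ≥0∞ :=
  sInf {q : ℝ≥0∞ | ∃ (f : R) (n : ℕ), f ≠ 0 ∧ 1 ≤ n ∧ (C f * X ^ n : Polynomial R) ∈ G ∧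
    q = (adicOrder m f : ℝ≥0∞) / (n : ℝ≥0∞)}

/-- `G = ⊕ I_l W^l` is *differentially closed* relative to a family `D` of derivations if
`I_{l+1} ⊆ I_l` and `D_j (I_l) ⊆ I_{l-1}` for all `l ≥ 1` and all `j`. -/
def DiffClosed {k R ι : Type*} [CommRing k] [CommRing R] [Algebra k R]
    (D : ι → Derivation k R R) (G : Subalgebra R (Polynomial R)) : Prop :=
  (∀ (f : R) (l : ℕ), 1 ≤ l → (C f * X ^ (l + 1) : Polynomial R) ∈ G →
      (C f * X ^ l : Polynomial R) ∈ G) ∧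
  (∀ (f : R) (l : ℕ) (j : ι), (C f * X ^ (l + 1) : Polynomial R) ∈ G →
      (C (D j f) * X ^ l : Polynomial R) ∈ G)

/-- `Diff(M)`: the smallest graded differentially closed subalgebra of `R[W]` containing the
set `M`. -/
def diffClosure {k R ι : Type*} [CommRing k] [CommRing R] [Algebra k R]
    (D : ι → Derivation k R R) (M : Set (Polynomial R)) : Subalgebra R (Polynomial R) :=
  sInf {G : Subalgebra R (Polynomial R) | M ⊆ ↑G ∧ Graded G ∧ DiffClosed D G}

/-- The image `ψ(G)` of a Rees algebra `G` over `R` under a homomorphism (arc) `ψ : R → K⟦t⟧`: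
the Rees algebra over `K⟦t⟧` generated by all `ψ(g) W^l` for `g W^l` a homogeneous element of
`G` with `ψ(g) ≠ 0`. -/
def arcImage {R A : Type*} [CommRing R] [CommRing A] (ψ : R → A)
    (G : Subalgebra R (Polynomial R)) : Subalgebra A (Polynomial A) :=
  Algebra.adjoin A {p : Polynomial A | ∃ (g : R) (l : ℕ),
    (C g * X ^ l : Polynomial R) ∈ G ∧ ψ g ≠ 0 ∧ p = C (ψ g) * X ^ l}

/-- The order `ord(ψ)` of an arc `ψ : R → K⟦t⟧`: the largest `n` such that
`ψ(m) ⊆ t^n` (`t` being the ideal `tI`). -/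
def homOrd {R A : Type*} [CommRing R] [CommRing A] (m : Ideal R) (tI : Ideal A)
    (ψ : R → A) : ℕ :=
  sSup {n : ℕ | ∀ s ∈ m, ψ s ∈ tI ^ n}

/-- The maximal ideal `(t)` of `K⟦t⟧`. -/
def tId (K : Type*) [CommRing K] : Ideal (PowerSeries K) :=
  Ideal.span {(PowerSeries.X : PowerSeries K)}

/-- The `t`-adic order on `K⟦t⟧`. -/
def tOrd {K : Type*} [CommRing K] (g : PowerSeries K) : ℕ :=
  adicOrder (tId K) g

/-- The family of ideals `I_l` of the graded algebra `G = ⊕ I_l W^l`. -/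
def idealFam {R : Type*} [CommRing R] (G : Subalgebra R (Polynomial R)) (l : ℕ) : Ideal R :=
  Submodule.comap (Polynomial.monomial l : R →ₗ[R] Polynomial R) (Subalgebra.toSubmodule G)

/-- The closed point of the local ring `(R, m)` belongs to the singular locus of
`G = ⊕ I_l W^l`, i.e. `ν(I_l) ≥ l` for all `l ≥ 1`. -/
def SingFam {R : Type*} [CommRing R] (m : Ideal R) (I : ℕ → Ideal R) : Prop :=
  ∀ l : ℕ, 1 ≤ l → I l ≤ m ^ l

/-- The transform `⊕ (I_l · T^{-l}) W^l` of a Rees algebra `⊕ I_l W^l` over a DVR with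
uniformizer `T` (when the closed point lies in the singular locus, `I_l ⊆ (T^l)` and
`I_l · T^{-l} = (I_l : (T^l))`). -/
def transformFam {R : Type*} [CommRing R] (T : R) (I : ℕ → Ideal R) : ℕ → Ideal R :=
  fun l => (I l).colon (Ideal.span {T ^ l})

/-- The persistance: the least number `κ` of transforms needed so that the closed point no
longer lies in the singular locus. -/
def persist {R : Type*} [CommRing R] (m : Ideal R) (T : R)
    (G : Subalgebra R (Polynomial R)) : ℕ :=
  sInf {κ : ℕ | ¬ SingFam m ((transformFam T)^[κ] (idealFam G))}

/-- The set of elements of a ring integral over a subset `s` (monic equation with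
coefficients in `s`). -/
def intClos {A : Type*} [CommRing A] (s : Set A) : Set A :=
  {p : A | ∃ q : Polynomial A, q.Monic ∧ (∀ n, q.coeff n ∈ s) ∧ Polynomial.eval p q = 0}


/-- The monic polynomial `f = x^b + B_{b-2} x^{b-2} + ⋯ + B_1 x + B_0` with coefficients
`B_j = Bc j` (only `j ≤ b - 2` is relevant). -/
def minPolyOf {S : Type*} [CommRing S] (b : ℕ) (Bc : ℕ → S) : Polynomial S :=
  Polynomial.X ^ b + ∑ j ∈ Finset.range (b - 1), Polynomial.C (Bc j) * Polynomial.X ^ j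


/-- The maximal ideal `(z_1, …, z_d)` of the polynomial ring `k[z_1, …, z_d]`
(the kernel of evaluation at the origin). -/
def mPoly (k : Type) [Field k] (d : ℕ) : Ideal (MvPolynomial (Fin d) k) :=
  RingHom.ker (MvPolynomial.aeval (fun _ => (0 : k)) : MvPolynomial (Fin d) k →ₐ[k] k)

instance {k : Type} [Field k] {d : ℕ} : (mPoly k d).IsMaximal :=
  RingHom.ker_isMaximal_of_surjective _ (fun a => ⟨MvPolynomial.C a, by simp⟩)

instance {k : Type} [Field k] {d : ℕ} : (mPoly k d).IsPrime :=
  (inferInstance : (mPoly k d).IsMaximal).isPrime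

/-- `IsSLoc k d S` says that `S` is (identified with) the localization of `k[z_1, …, z_d]`
at the maximal ideal `(z_1, …, z_d)`. -/
abbrev IsSLoc (k : Type) [Field k] (d : ℕ) (S : Type) [CommRing S]
    [Algebra (MvPolynomial (Fin d) k) S] : Prop :=
  IsLocalization.AtPrime S (mPoly k d)

/-- The element `z_j` of `S`. -/
def zvar (k : Type) [Field k] (d : ℕ) (S : Type) [CommRing S]
    [Algebra (MvPolynomial (Fin d) k) S] (j : Fin d) : S :=
  algebraMap (MvPolynomial (Fin d) k) S (MvPolynomial.X j)

/-- The maximal ideal `m = (z_1, …, z_d)` of the local ring `S`. -/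
def mS (k : Type) [Field k] (d : ℕ) (S : Type) [CommRing S]
    [Algebra (MvPolynomial (Fin d) k) S] : Ideal S :=
  (mPoly k d).map (algebraMap (MvPolynomial (Fin d) k) S)


variable (k : Type) [Field k] (d : ℕ)
variable (S : Type) [CommRing S] [Algebra (MvPolynomial (Fin d) k) S] [Algebra k S]

/-- A local presentation, attached to the multiplicity, of a `d`-dimensional variety
`X = Spec B` at the closed point `ξ`:  `B = S[x_1,…,x_{n-d}]/I` with `I` prime,
`S → B` injective and finite, and the minimal polynomial over `Frac S` of the class `θ_i`
of `x_i` is `f_i = x_i^{b_i} + B_{i,b_i-2} x_i^{b_i-2} + ⋯ + B_{i,0}` with `b_i ≥ 2`,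
`B_{i,j} ∈ m^{b_i - j}`, and some `B_{i,j} ≠ 0`. -/
structure Presentation [IsDomain S] : Type 1 where
  /-- the number `n - d ≥ 1` of extra variables `x_i` -/
  e : ℕ
  he : 1 ≤ e
  /-- the prime ideal `I ⊆ S[x_1,…,x_{n-d}]` defining `X` -/
  I : Ideal (MvPolynomial (Fin e) S)
  hprime : I.IsPrime
  hinj : Function.Injective (algebraMap S (MvPolynomial (Fin e) S ⧸ I))
  hfinite : Module.Finite S (MvPolynomial (Fin e) S ⧸ I)
  /-- the degrees `b_i ≥ 2` -/
  b : Fin e → ℕ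
  hb : ∀ i, 2 ≤ b i
  /-- the coefficients `B_{i,j}` (only `j ≤ b_i - 2` is relevant) -/
  Bc : Fin e → ℕ → S
  /-- `f_i(θ_i) = 0` -/
  hroot : ∀ i, Polynomial.aeval (Ideal.Quotient.mk I (MvPolynomial.X i))
    (minPolyOf (b i) (Bc i)) = 0
  /-- `f_i` is irreducible over `Frac S`, i.e. it is the minimal polynomial of `θ_i` -/
  hirr : ∀ i, Irreducible ((minPolyOf (b i) (Bc i)).map (algebraMap S (FractionRing S)))
  /-- `B_{i,j} ∈ m^{b_i - j}` -/
  hmem : ∀ i, ∀ j ≤ b i - 2, Bc i j ∈ (mS k d S) ^ (b i - j)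
  /-- some `B_{i,j} ≠ 0` -/
  hnz : ∃ i, ∃ j ≤ b i - 2, Bc i j ≠ 0

variable [IsDomain S]
variable {k d S}

/-- The coordinate ring `B = S[x_1,…,x_{n-d}]/I` of `X`. -/
abbrev BRing (P : Presentation k d S) : Type :=
  MvPolynomial (Fin P.e) S ⧸ P.I

/-- The class `θ_i` of `x_i` in `B`. -/
def theta (P : Presentation k d S) (i : Fin P.e) : BRing P :=
  Ideal.Quotient.mk P.I (MvPolynomial.X i)

/-- The elimination algebra in dimension `d`:
`G_X^{(d)} = Diff( S[ B_{i,j} W^{b_i - j} : i, j ] )`, a Rees algebra over `S`. -/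
def elimAlg (P : Presentation k d S) (D : Fin d → Derivation k S S) :
    Subalgebra S (Polynomial S) :=
  diffClosure D {p : Polynomial S | ∃ i, ∃ j ≤ P.b i - 2,
    p = Polynomial.C (P.Bc i j) * Polynomial.X ^ (P.b i - j)}

/-- An arc in `X` through `ξ` (with the required nonvanishing): a `k`-algebra homomorphism
`φ : B → K⟦t⟧` sending the maximal ideal of `B` at `ξ` into `(t)`, with all `φ(θ_i)` and
`φ(z_j)` nonzero. -/
def IsArc (P : Presentation k d S) {K : Type} [Field K] [Algebra k K]
    (φ : BRing P →ₐ[k] PowerSeries K) : Prop :=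
  (∀ s ∈ mS k d S, φ (algebraMap S (BRing P) s) ∈ tId K) ∧
  (∀ i, φ (theta P i) ∈ tId K) ∧
  (∀ i, φ (theta P i) ≠ 0) ∧
  (∀ j, φ (algebraMap S (BRing P) (zvar k d S j)) ≠ 0)

/-- The order of an arc: the minimum of the `t`-adic orders of the `φ(θ_i)` and the
`φ(z_j)`. -/
def arcOrd (P : Presentation k d S) {K : Type} [Field K] [Algebra k K]
    (φ : BRing P →ₐ[k] PowerSeries K) : ℕ :=
  sInf ((Set.range fun i => tOrd (φ (theta P i))) ∪
    (Set.range fun j => tOrd (φ (algebraMap S (BRing P) (zvar k d S j)))))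

/-- The contact algebra `G^{(1)}_{X_0,φ}`: the Rees algebra over `K⟦t⟧` generated by the
`φ(θ_i) W` together with all `φ(g) W^l` for `g W^l` a homogeneous element of `G_X^{(d)}`
with `φ(g) ≠ 0`. -/
def contactAlg (P : Presentation k d S) (D : Fin d → Derivation k S S)
    {K : Type} [Field K] [Algebra k K] (φ : BRing P →ₐ[k] PowerSeries K) :
    Subalgebra (PowerSeries K) (Polynomial (PowerSeries K)) :=
  Algebra.adjoin (PowerSeries K)
    ((Set.range fun i => (Polynomial.C (φ (theta P i)) * Polynomial.X :
        Polynomial (PowerSeries K))) ∪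
      {p : Polynomial (PowerSeries K) | ∃ (g : S) (l : ℕ),
        (Polynomial.C g * Polynomial.X ^ l : Polynomial S) ∈ elimAlg P D ∧
        φ (algebraMap S (BRing P) g) ≠ 0 ∧
        p = Polynomial.C (φ (algebraMap S (BRing P) g)) * Polynomial.X ^ l})

/-- The order of contact `r_{X,φ}` of the arc `φ` with `Max mult(X)`: the order of the
contact algebra at the closed point of `K⟦t⟧`. -/
def rOrd (P : Presentation k d S) (D : Fin d → Derivation k S S)
    {K : Type} [Field K] [Algebra k K] (φ : BRing P →ₐ[k] PowerSeries K) : ℝ≥0∞ :=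
  reesOrder (tId K) (contactAlg P D φ)

/-- The persistance `ρ_{X,φ}`: the least number of transforms of the contact algebra
(i.e. of point blow-ups directed by `φ`) needed to make the closed point leave the
singular locus, that is, to lower the Nash multiplicity. -/
def rho (P : Presentation k d S) (D : Fin d → Derivation k S S)
    {K : Type} [Field K] [Algebra k K] (φ : BRing P →ₐ[k] PowerSeries K) : ℕ :=
  persist (tId K) (PowerSeries.X : PowerSeries K) (contactAlg P D φ)

/-!
Call `⊕ I_l W^l` singular to order `c` along `m` when `I_l ⊆ m^{c l}` for all `l ≥ 1`, that is,
when `SingFam (m ^ c)` holds.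

Over `K⟦t⟧`, after `κ` transforms the closed point is still singular exactly when the original
algebra was singular to order `κ + 1`, so the persistance is the largest such `c`, that is, the
integral part of the order of the algebra.  This gives `ρ ≤ r`.

For the other bound, put `N = ⌊ord G_X^{(d)}⌋` and `a = ord φ`.  The elimination algebra is singular
to order `N` along `m` and `φ` maps `m` into `(t^a)`, so its image is singular to order `a N`.  By
`f_i(φ(θ_i)) = 0` the element `φ(θ_i) / t^{aN}` is integral over the integrally closed ring `K⟦t⟧`.
Hence adding the `φ(θ_i) W` keeps the algebra singular to order `a N`, and `a N ≤ ρ`.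
-/

theorem mem_idealFam {R : Type*} [CommRing R] {G : Subalgebra R R[X]} {l : ℕ} {f : R} :
    f ∈ idealFam G l ↔ (C f * X ^ l : R[X]) ∈ G := by
  rw [C_mul_X_pow_eq_monomial]
  rfl

theorem SingFam.mono {R : Type*} [CommRing R] {m n : Ideal R} {I : ℕ → Ideal R}
    (h : SingFam m I) (hmn : m ≤ n) : SingFam n I :=
  fun l hl => (h l hl).trans (Ideal.pow_right_mono hmn l)

theorem SingFam.map {R A : Type*} [CommRing R] [CommRing A] {m : Ideal R} {I : ℕ → Ideal R}
    (h : SingFam m I) (f : R →+* A) : SingFam (m.map f) fun l => (I l).map f :=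
  fun l hl => (Ideal.map_mono (h l hl)).trans_eq (Ideal.map_pow f m l)

theorem singFam_idealFam_of_le_reesAlgebra {R : Type*} [CommRing R] {m : Ideal R}
    {G : Subalgebra R R[X]} (h : G ≤ reesAlgebra m) : SingFam m (idealFam G) :=
  fun _ _ _ hf => reesAlgebra.monomial_mem.1 (h hf)

theorem exists_notMem_pow {R : Type*} [CommRing R] {m : Ideal R} (hm : ⨅ n : ℕ, m ^ n = ⊥) {f : R}
    (hf : f ≠ 0) : ∃ c : ℕ, f ∉ m ^ c := by
  contrapose! hf
  rwa [← Ideal.mem_bot, ← hm, Ideal.mem_iInf]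

theorem exists_not_singFam_pow {R : Type*} [CommRing R] {m : Ideal R} (hm : ⨅ n : ℕ, m ^ n = ⊥)
    {I : ℕ → Ideal R} {l : ℕ} (hl : 1 ≤ l) {f : R} (hf : f ∈ I l) (hf0 : f ≠ 0) :
    ∃ c, ¬ SingFam (m ^ c) I := by
  obtain ⟨c, hc⟩ := exists_notMem_pow hm hf0
  exact ⟨c, fun h => hc (Ideal.pow_le_self (Nat.one_le_iff_ne_zero.1 hl) (h l hl hf))⟩

/-! ### Orders -/

theorem mem_pow_of_le_adicOrder {R : Type*} [CommRing R] {m : Ideal R} {f : R} {n : ℕ}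
    (h : n ≤ adicOrder m f) : f ∈ m ^ n := by
  rcases n.eq_zero_or_pos with rfl | hn
  · simp
  have hbdd : BddAbove {n : ℕ | f ∈ m ^ n} := by
    by_contra hunbdd
    rw [adicOrder, Nat.sSup_of_not_bddAbove hunbdd] at h
    omega
  exact Ideal.pow_le_pow_right h (Nat.sSup_mem (s := {n : ℕ | f ∈ m ^ n}) ⟨0, by simp⟩ hbdd)

theorem le_adicOrder_of_mem_pow {R : Type*} [CommRing R] {m : Ideal R}
    (hm : ⨅ n : ℕ, m ^ n = ⊥) {f : R} (hf0 : f ≠ 0) {n : ℕ} (hf : f ∈ m ^ n) :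
    n ≤ adicOrder m f := by
  obtain ⟨c, hc⟩ := exists_notMem_pow hm hf0
  refine le_csSup ⟨c, fun j hj => ?_⟩ hf
  exact (not_le.1 fun hcj => hc (Ideal.pow_le_pow_right hcj hj)).le

theorem natCast_le_reesOrder_iff {R : Type*} [CommRing R] {m : Ideal R} {G : Subalgebra R R[X]}
    {c : ℕ} : (c : ℝ≥0∞) ≤ reesOrder m G ↔
      ∀ l, 1 ≤ l → ∀ f ∈ idealFam G l, f ≠ 0 → c * l ≤ adicOrder m f := by
  have le_div_iff {n l : ℕ} (hl : 1 ≤ l) : (c : ℝ≥0∞) ≤ (n : ℝ≥0∞) / l ↔ c * l ≤ n := by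
    have hl0 : (l : ℝ≥0∞) ≠ 0 := Nat.cast_ne_zero.2 (by omega)
    rw [ENNReal.le_div_iff_mul_le (.inl hl0) (.inl (ENNReal.natCast_ne_top l))]
    exact_mod_cast Iff.rfl
  rw [reesOrder, le_sInf_iff]
  constructor
  · intro h l hl f hf hf0
    exact (le_div_iff hl).1 (h _ ⟨f, l, hf0, hl, mem_idealFam.1 hf, rfl⟩)
  · rintro h _ ⟨f, l, hf0, hl, hf, rfl⟩
    exact (le_div_iff hl).2 (h l hl f (mem_idealFam.2 hf) hf0)

theorem singFam_pow_of_natCast_le_reesOrder {R : Type*} [CommRing R] {m : Ideal R}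
    {G : Subalgebra R R[X]} {c : ℕ} (h : (c : ℝ≥0∞) ≤ reesOrder m G) :
    SingFam (m ^ c) (idealFam G) := by
  intro l hl f hf
  rcases eq_or_ne f 0 with rfl | hf0
  · exact zero_mem _
  · rw [← pow_mul]
    exact mem_pow_of_le_adicOrder (natCast_le_reesOrder_iff.1 h l hl f hf hf0)

theorem SingFam.natCast_le_reesOrder {R : Type*} [CommRing R] {m : Ideal R}
    (hm : ⨅ n : ℕ, m ^ n = ⊥) {G : Subalgebra R R[X]} {c : ℕ} (h : SingFam (m ^ c) (idealFam G)) :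
    (c : ℝ≥0∞) ≤ reesOrder m G :=
  natCast_le_reesOrder_iff.2 fun l hl _ hf hf0 =>
    le_adicOrder_of_mem_pow hm hf0 (pow_mul m c l ▸ h l hl hf)

theorem natCast_floor_toReal_le (x : ℝ≥0∞) : (⌊x.toReal⌋₊ : ℝ≥0∞) ≤ x :=
  (ENNReal.ofReal_natCast _).symm.trans_le <|
    ENNReal.ofReal_le_of_le_toReal (Nat.floor_le ENNReal.toReal_nonneg)

/-! ### Transforms and persistance -/

theorem mem_iterate_transformFam {R : Type*} [CommRing R] {T : R} {κ : ℕ} {I : ℕ → Ideal R}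
    {l : ℕ} {f : R} : f ∈ (transformFam T)^[κ] I l ↔ T ^ (κ * l) * f ∈ I l := by
  induction κ generalizing f with
  | zero => simp
  | succ κ ih =>
    rw [Function.iterate_succ_apply', transformFam, Ideal.mem_colon_span_singleton, ih]
    ring_nf

theorem singFam_pow_succ_of_iterate_transformFam {R : Type*} [CommRing R] {T : R} {κ : ℕ}
    {I : ℕ → Ideal R} (h : SingFam (Ideal.span {T}) ((transformFam T)^[κ] I)) :
    SingFam (Ideal.span {T} ^ (κ + 1)) I := by
  intro l hl f hf
  have dvd_of_mem {g : R} (hg : T ^ (κ * l) * g ∈ I l) : T ^ l ∣ g := by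
    have := h l hl (mem_iterate_transformFam.2 hg)
    rwa [Ideal.span_singleton_pow, Ideal.mem_span_singleton] at this
  have pow_dvd (j : ℕ) (hj : j ≤ κ * l) : T ^ j ∣ f := by
    induction j with
    | zero => simp
    | succ j ih =>
      obtain ⟨g, rfl⟩ := ih (by omega)
      have hg : T ^ l ∣ g := dvd_of_mem <| by
        rw [← Nat.sub_add_cancel (Nat.le_of_succ_le hj), pow_add, mul_assoc]
        exact (I l).mul_mem_left _ hf
      exact pow_succ T j ▸ mul_dvd_mul_left _ ((dvd_pow_self T (by omega)).trans hg)
  obtain ⟨g, rfl⟩ := pow_dvd _ le_rfl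
  rw [← pow_mul, Ideal.span_singleton_pow, Ideal.mem_span_singleton, Nat.succ_mul, pow_add]
  exact mul_dvd_mul_left _ (dvd_of_mem hf)

theorem singFam_iterate_transformFam_iff {R : Type*} [CommRing R] {T : R} (hT : IsLeftRegular T)
    {κ : ℕ} {I : ℕ → Ideal R} :
    SingFam (Ideal.span {T}) ((transformFam T)^[κ] I) ↔ SingFam (Ideal.span {T} ^ (κ + 1)) I := by
  refine ⟨singFam_pow_succ_of_iterate_transformFam, fun h l hl f hf => ?_⟩
  have hdvd := h l hl (mem_iterate_transformFam.1 hf)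
  rw [← pow_mul, Ideal.span_singleton_pow, Ideal.mem_span_singleton, Nat.succ_mul, pow_add] at hdvd
  rw [Ideal.span_singleton_pow, Ideal.mem_span_singleton]
  exact (hT.pow _).dvd_cancel_left.1 hdvd

theorem singFam_pow_persist {R : Type*} [CommRing R] (T : R) (G : Subalgebra R R[X]) :
    SingFam (Ideal.span {T} ^ persist (Ideal.span {T}) T G) (idealFam G) := by
  rcases h : persist (Ideal.span {T}) T G with _ | κ
  · exact fun l _ => by simp [Ideal.one_eq_top, Ideal.top_pow]
  · refine singFam_pow_succ_of_iterate_transformFam (not_not.1 fun hκ => ?_)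
    have : persist (Ideal.span {T}) T G ≤ κ := Nat.sInf_le hκ
    omega

theorem le_persist {R : Type*} [CommRing R] {T : R} (hT : IsLeftRegular T) {G : Subalgebra R R[X]}
    (hG : ∃ c, ¬ SingFam (Ideal.span {T} ^ c) (idealFam G)) {c : ℕ}
    (h : SingFam (Ideal.span {T} ^ c) (idealFam G)) : c ≤ persist (Ideal.span {T}) T G := by
  obtain ⟨κ₀, hκ₀⟩ := hG
  refine le_csInf ⟨κ₀, fun hsing => hκ₀ ?_⟩ fun κ hκ => not_lt.1 fun hlt => hκ ?_
  · exact ((singFam_iterate_transformFam_iff hT).1 hsing).mono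
      (Ideal.pow_le_pow_right κ₀.le_succ)
  · exact (singFam_iterate_transformFam_iff hT).2 (h.mono (Ideal.pow_le_pow_right hlt))

theorem persist_le_reesOrder {R : Type*} [CommRing R] {T : R}
    (hT : ⨅ n : ℕ, Ideal.span {T} ^ n = ⊥) (G : Subalgebra R R[X]) :
    (persist (Ideal.span {T}) T G : ℝ≥0∞) ≤ reesOrder (Ideal.span {T}) G :=
  (singFam_pow_persist T G).natCast_le_reesOrder hT

/-! ### Roots of monic polynomials over integrally closed domains -/

theorem dvd_of_isRoot_scaleRoots {R : Type*} [CommRing R] [IsDomain R] [IsIntegrallyClosed R]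
    {p : R[X]} (hp : p.Monic) {a x : R} (hx : (p.scaleRoots a).IsRoot x) : a ∣ x := by
  rcases eq_or_ne a 0 with rfl | ha
  · rw [IsRoot.def, scaleRoots_zero, hp.leadingCoeff, one_smul, eval_pow, eval_X] at hx
    exact zero_dvd_iff.2 (eq_zero_of_pow_eq_zero hx)
  set K := FractionRing R
  have haK : algebraMap R K a ≠ 0 := IsFractionRing.to_map_eq_zero_iff.not.2 ha
  have hdiv : algebraMap R K x = algebraMap R K a * (algebraMap R K x / algebraMap R K a) :=
    (mul_div_cancel₀ _ haK).symm
  have hroot : eval₂ (algebraMap R K) (algebraMap R K x / algebraMap R K a) p = 0 := by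
    have h := scaleRoots_eval₂_mul (p := p) (algebraMap R K)
      (algebraMap R K x / algebraMap R K a) a
    rw [← hdiv, eval₂_at_apply, hx.eq_zero, map_zero] at h
    exact (mul_eq_zero.1 h.symm).resolve_left (pow_ne_zero _ haK)
  obtain ⟨y, hy⟩ := IsIntegrallyClosed.isIntegral_iff.1 ⟨p, hp, hroot⟩
  exact ⟨y, IsFractionRing.injective R K (by rw [hdiv, map_mul, hy])⟩

theorem coeff_minPolyOf {R : Type*} [CommRing R] (b : ℕ) (Bc : ℕ → R) (n : ℕ) :
    (minPolyOf b Bc).coeff n = (if n = b then 1 else 0) + if n < b - 1 then Bc n else 0 := by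
  simp [minPolyOf, coeff_X_pow]

theorem degree_sum_range_C_mul_X_pow_lt {R : Type*} [CommRing R] (b : ℕ) (Bc : ℕ → R) :
    (∑ j ∈ Finset.range (b - 1), C (Bc j) * X ^ j : R[X]).degree < (b : WithBot ℕ) :=
  mem_degreeLT.1 <| sum_mem fun j hj => mem_degreeLT.2 <|
    (degree_C_mul_X_pow_le j _).trans_lt <| Nat.cast_lt.2 <| by
      have := Finset.mem_range.1 hj
      omega

theorem monic_minPolyOf {R : Type*} [CommRing R] (b : ℕ) (Bc : ℕ → R) : (minPolyOf b Bc).Monic :=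
  monic_X_pow_add (degree_sum_range_C_mul_X_pow_lt b Bc)

theorem natDegree_minPolyOf {R : Type*} [CommRing R] [Nontrivial R] (b : ℕ) (Bc : ℕ → R) :
    (minPolyOf b Bc).natDegree = b := by
  have hlt := degree_sum_range_C_mul_X_pow_lt b Bc
  rw [← degree_X_pow (R := R) b] at hlt
  exact (natDegree_add_eq_left_of_degree_lt hlt).trans (natDegree_X_pow b)

theorem map_minPolyOf {R A : Type*} [CommRing R] [CommRing A] (f : R →+* A) (b : ℕ) (Bc : ℕ → R) :
    (minPolyOf b Bc).map f = minPolyOf b (f ∘ Bc) := by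
  simp [minPolyOf, Polynomial.map_sum]

theorem scaleRoots_minPolyOf {R : Type*} [CommRing R] (b : ℕ) (Bc : ℕ → R) (a : R) :
    (minPolyOf b Bc).scaleRoots a = minPolyOf b fun j => a ^ (b - j) * Bc j := by
  nontriviality R
  ext n
  rw [coeff_scaleRoots, natDegree_minPolyOf, coeff_minPolyOf, coeff_minPolyOf]
  split_ifs with hnb <;> simp [hnb, mul_comm]

theorem dvd_of_isRoot_minPolyOf {R : Type*} [CommRing R] [IsDomain R] [IsIntegrallyClosed R]
    {b : ℕ} {Bc : ℕ → R} {a x : R} (hB : ∀ j < b - 1, a ^ (b - j) ∣ Bc j)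
    (hx : (minPolyOf b Bc).IsRoot x) : a ∣ x := by
  choose! β hβ using hB
  refine dvd_of_isRoot_scaleRoots (monic_minPolyOf b β) ?_
  convert hx using 1
  rw [scaleRoots_minPolyOf]
  refine congrArg (X ^ b + ·) (Finset.sum_congr rfl fun j hj => ?_)
  rw [hβ j (Finset.mem_range.1 hj)]

/-! ### The formal disc and the base -/

theorem iInf_tId_pow (K : Type*) [Field K] : ⨅ n : ℕ, tId K ^ n = ⊥ :=
  Ideal.iInf_pow_eq_bot_of_isDomain _ <| by
    simp [tId, Ideal.span_singleton_eq_top, PowerSeries.X_prime.not_isUnit]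

theorem mPoly_eq_idealOfVars (k : Type) [Field k] (d : ℕ) :
    mPoly k d = MvPolynomial.idealOfVars (Fin d) k := by
  ext p
  rw [← pow_one (MvPolynomial.idealOfVars (Fin d) k), MvPolynomial.mem_pow_idealOfVars_iff']
  simp [mPoly, MvPolynomial.constantCoeff_eq, Finsupp.degree_eq_zero_iff]

theorem mS_eq_span (k : Type) [Field k] (d : ℕ) (R : Type) [CommRing R]
    [Algebra (MvPolynomial (Fin d) k) R] :
    mS k d R = Ideal.span (Set.range (zvar k d R)) := by
  rw [mS, mPoly_eq_idealOfVars, Ideal.map_span, ← Set.range_comp]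
  rfl

/-! ### Arcs -/

section Arc

/-- The projection `S → B → K⟦t⟧` of an arc in `X = Spec B` to the base `Spec S`. -/
def baseArc {P : Presentation k d S} {K : Type} [Field K] [Algebra k K]
    (φ : BRing P →ₐ[k] PowerSeries K) : S →+* PowerSeries K :=
  (φ : BRing P →+* PowerSeries K).comp (algebraMap S (BRing P))

variable {P : Presentation k d S} {D : Fin d → Derivation k S S} {K : Type} [Field K] [Algebra k K]
  {φ : BRing P →ₐ[k] PowerSeries K}

theorem arcOrd_pos (hφ : IsArc P φ) : 0 < arcOrd P φ := by
  obtain ⟨hm, hθ, hθ0, hz0⟩ := hφ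
  have : Nonempty (Fin P.e) := ⟨⟨0, P.he⟩⟩
  refine Nat.succ_le_iff.1 (le_csInf (Set.range_nonempty _).inl ?_)
  rintro _ (⟨i, rfl⟩ | ⟨j, rfl⟩) <;> refine le_adicOrder_of_mem_pow (iInf_tId_pow K) ?_ ?_
  · exact hθ0 i
  · simpa using hθ i
  · exact hz0 j
  · simpa using hm _ (mS_eq_span k d S ▸ Ideal.subset_span ⟨j, rfl⟩)

theorem map_baseArc_mS_le :
    (mS k d S).map (baseArc φ) ≤ tId K ^ arcOrd P φ := by
  rw [mS_eq_span, Ideal.map_span, Ideal.span_le]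
  rintro _ ⟨_, ⟨j, rfl⟩, rfl⟩
  exact mem_pow_of_le_adicOrder (Nat.sInf_le (Or.inr ⟨j, rfl⟩))

theorem coeff_mem_idealFam_elimAlg {i : Fin P.e} {j : ℕ} (hj : j ≤ P.b i - 2) :
    P.Bc i j ∈ idealFam (elimAlg P D) (P.b i - j) :=
  mem_idealFam.2 <| Algebra.mem_sInf.2 fun _ hG => hG.1 ⟨i, j, hj, rfl⟩

theorem theta_mem_idealFam_contactAlg (i : Fin P.e) :
    φ (theta P i) ∈ idealFam (contactAlg P D φ) 1 :=
  mem_idealFam.2 <| Algebra.subset_adjoin <| .inl ⟨i, by rw [pow_one]⟩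

theorem isRoot_minPolyOf_theta (i : Fin P.e) :
    (minPolyOf (P.b i) (baseArc φ ∘ P.Bc i)).IsRoot (φ (theta P i)) := by
  rw [← map_minPolyOf, IsRoot.def, eval_map]
  have h := congrArg φ (P.hroot i)
  rw [map_zero] at h
  exact (hom_eval₂ _ _ (φ : BRing P →+* PowerSeries K) _).symm.trans h

theorem theta_mem_of_singFam_map_elimAlg {a : PowerSeries K}
    (h : SingFam (Ideal.span {a}) fun l => (idealFam (elimAlg P D) l).map (baseArc φ))
    (i : Fin P.e) : φ (theta P i) ∈ Ideal.span {a} := by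
  refine Ideal.mem_span_singleton.2 <|
    dvd_of_isRoot_minPolyOf (fun j hj => ?_) (isRoot_minPolyOf_theta i)
  rw [← Ideal.mem_span_singleton, ← Ideal.span_singleton_pow]
  exact h _ (by omega) (Ideal.mem_map_of_mem _ (coeff_mem_idealFam_elimAlg (by omega)))

theorem singFam_contactAlg_of_singFam_map_elimAlg {a : PowerSeries K}
    (h : SingFam (Ideal.span {a}) fun l => (idealFam (elimAlg P D) l).map (baseArc φ)) :
    SingFam (Ideal.span {a}) (idealFam (contactAlg P D φ)) := by
  refine singFam_idealFam_of_le_reesAlgebra (Algebra.adjoin_le ?_)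
  rintro _ (⟨i, rfl⟩ | ⟨g, l, hg, -, rfl⟩)
  · beta_reduce
    rw [C_mul_X_eq_monomial]
    exact reesAlgebra.monomial_mem.2 <| by simpa using theta_mem_of_singFam_map_elimAlg h i
  · rw [C_mul_X_pow_eq_monomial]
    refine reesAlgebra.monomial_mem.2 ?_
    rcases l.eq_zero_or_pos with rfl | hl
    · simp
    · exact h l hl (Ideal.mem_map_of_mem (baseArc φ) (mem_idealFam.2 hg))

theorem singFam_contactAlg_of_natCast_le_reesOrder {N : ℕ}
    (hN : (N : ℝ≥0∞) ≤ reesOrder (mS k d S) (elimAlg P D)) :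
    SingFam (tId K ^ (arcOrd P φ * N)) (idealFam (contactAlg P D φ)) := by
  have himage : SingFam (tId K ^ (arcOrd P φ * N))
      fun l => (idealFam (elimAlg P D) l).map (baseArc φ) := by
    refine ((singFam_pow_of_natCast_le_reesOrder hN).map (baseArc φ)).mono ?_
    rw [Ideal.map_pow, pow_mul]
    exact Ideal.pow_right_mono map_baseArc_mS_le N
  rw [tId, Ideal.span_singleton_pow] at himage ⊢
  exact singFam_contactAlg_of_singFam_map_elimAlg himage

theorem arcOrd_mul_le_rho (hφ : IsArc P φ) {N : ℕ}
    (hN : (N : ℝ≥0∞) ≤ reesOrder (mS k d S) (elimAlg P D)) :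
    arcOrd P φ * N ≤ rho P D φ :=
  le_persist (IsRegular.of_ne_zero PowerSeries.X_ne_zero).left
    (exists_not_singFam_pow (iInf_tId_pow K) le_rfl
      (theta_mem_idealFam_contactAlg ⟨0, P.he⟩) (hφ.2.2.1 _))
    (singFam_contactAlg_of_natCast_le_reesOrder hN)

end Arc

theorem normalized_persistance_bounds_general
    {k : Type} [Field k] {d : ℕ} {S : Type} [CommRing S] [IsDomain S]
    [Algebra (MvPolynomial (Fin d) k) S] [Algebra k S]
    (D : Fin d → Derivation k S S) (P : Presentation k d S)
    {K : Type} [Field K] [Algebra k K] (φ : BRing P →ₐ[k] PowerSeries K) (hφ : IsArc P φ) :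
    (rho P D φ : ℝ≥0∞) / (arcOrd P φ : ℝ≥0∞) ≤ rOrd P D φ / (arcOrd P φ : ℝ≥0∞) ∧
    (Nat.floor (reesOrder (mS k d S) (elimAlg P D)).toReal : ℝ≥0∞) ≤
      (rho P D φ : ℝ≥0∞) / (arcOrd P φ : ℝ≥0∞) := by
  constructor
  · exact ENNReal.div_le_div_right (persist_le_reesOrder (iInf_tId_pow K) _) _
  · have hord : (arcOrd P φ : ℝ≥0∞) ≠ 0 := Nat.cast_ne_zero.2 (arcOrd_pos hφ).ne'
    rw [ENNReal.le_div_iff_mul_le (.inl hord) (.inl (ENNReal.natCast_ne_top _)), mul_comm]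
    exact_mod_cast arcOrd_mul_le_rho hφ (natCast_floor_toReal_le _)

/-- (Final Corollary.)  For every arc `φ` in `X` through `ξ`:
(1) `r̄_{X,φ} ≥ ρ̄_{X,φ}`, and (2) `ρ̄_{X,φ} ≥ ⌊ord(G_X^{(d)})⌋`. -/
theorem normalized_persistance_bounds
    (k : Type) [Field k] [CharZero k] (d : ℕ) (hd : 1 ≤ d)
    (S : Type) [CommRing S] [IsDomain S] [Algebra (MvPolynomial (Fin d) k) S]
    [Algebra k S] [IsScalarTower k (MvPolynomial (Fin d) k) S] [IsSLoc k d S]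
    (D : Fin d → Derivation k S S)
    (hD : ∀ i j : Fin d, D j (zvar k d S i) = if i = j then 1 else 0)
    (P : Presentation k d S)
    (K : Type) [Field K] [Algebra k K]
    (φ : BRing P →ₐ[k] PowerSeries K) (hφ : IsArc P φ) :
    (rho P D φ : ℝ≥0∞) / (arcOrd P φ : ℝ≥0∞) ≤ rOrd P D φ / (arcOrd P φ : ℝ≥0∞) ∧
    (Nat.floor (reesOrder (mS k d S) (elimAlg P D)).toReal : ℝ≥0∞) ≤
      (rho P D φ : ℝ≥0∞) / (arcOrd P φ : ℝ≥0∞) := by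
  exact normalized_persistance_bounds_general D P φ hφ

end NashMult
end
end

section
/- In the hypersurface setting of the context, let φ : S[x] → K[[t]] be an arc in X = V(f) through the closed point with φ(x) = u_0t^{α_0} and φ(z_j) = u_jt^{α_j} (units u_j ∈ K[[t]], positive integers α_j). Then α_0 ≥ min over those i with φ(B_i) ≠ 0 of ord_t(φ(B_i))/(b−i) (this set of indices is nonempty), and consequently ord(G^{(1)}_{X_0,φ}) = ord(G^{(1)}_{X_0,φ^{(d)}}): the order of the contact algebra of φ equals the order of the contact algebra of its projection φ^{(d)}. -/
open Polynomial
open scoped ENNReal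

noncomputable section

namespace NashMult

variable (k : Type) [Field k] (d : ℕ)
variable (S : Type) [CommRing S] [Algebra (MvPolynomial (Fin d) k) S] [Algebra k S]

/-- The elimination algebra `G_X^{(d)} = Diff(S[B_{b-2} W^2, …, B_0 W^b])` over `S` of the
hypersurface `X = V(f)`, where `f = x^b + B_{b-2} x^{b-2} + ⋯ + B_0`. -/
def hypElim (D : Fin d → Derivation k S S) (b : ℕ) (Bc : ℕ → S) :
    Subalgebra S (Polynomial S) :=
  diffClosure D {p : Polynomial S | ∃ i ≤ b - 2,
    p = Polynomial.C (Bc i) * Polynomial.X ^ (b - i)}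

/-- An arc in the hypersurface `X = V(f)` through the closed point `ξ`: a `k`-algebra
homomorphism `φ : S[x] → K⟦t⟧` with `φ(f) = 0` and `φ(x), φ(z_1), …, φ(z_d) ∈ (t)`,
with `φ(x)` and all `φ(z_j)` nonzero. -/
def IsHypArc (b : ℕ) (Bc : ℕ → S) {K : Type} [Field K] [Algebra k K]
    (φ : Polynomial S →ₐ[k] PowerSeries K) : Prop :=
  φ (minPolyOf b Bc) = 0 ∧
  φ Polynomial.X ∈ tId K ∧ (∀ j, φ (Polynomial.C (zvar k d S j)) ∈ tId K) ∧
  φ Polynomial.X ≠ 0 ∧ (∀ j, φ (Polynomial.C (zvar k d S j)) ≠ 0)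

/-- The order of the arc `φ`: `ord(φ) = min {α_0, α_1, …, α_d}`, where
`α_0 = ord_t φ(x)` and `α_j = ord_t φ(z_j)`. -/
def hypArcOrd {K : Type} [Field K] [Algebra k K]
    (φ : Polynomial S →ₐ[k] PowerSeries K) : ℕ :=
  sInf (insert (tOrd (φ Polynomial.X))
    (Set.range fun j => tOrd (φ (Polynomial.C (zvar k d S j)))))

/-- The contact algebra `G^{(1)}_{X_0,φ}`: the Rees algebra over `K⟦t⟧` generated by
`t^{α_0} W` together with all `φ(g) W^l`, for `g W^l` a homogeneous element of `G_X^{(d)}`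
with `φ(g) ≠ 0`. -/
def hypContact (D : Fin d → Derivation k S S) (b : ℕ) (Bc : ℕ → S)
    {K : Type} [Field K] [Algebra k K] (φ : Polynomial S →ₐ[k] PowerSeries K) :
    Subalgebra (PowerSeries K) (Polynomial (PowerSeries K)) :=
  Algebra.adjoin (PowerSeries K)
    (insert
      (Polynomial.C ((PowerSeries.X : PowerSeries K) ^ tOrd (φ Polynomial.X)) * Polynomial.X)
      {p : Polynomial (PowerSeries K) | ∃ (g : S) (l : ℕ),
        (Polynomial.C g * Polynomial.X ^ l : Polynomial S) ∈ hypElim k d S D b Bc ∧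
        φ (Polynomial.C g) ≠ 0 ∧
        p = Polynomial.C (φ (Polynomial.C g)) * Polynomial.X ^ l})

/-!
In `x ^ b + ∑ Bᵢ x ^ i = 0` the leading term must be compensated, so some `Bᵢ x ^ i` has order at
most `b · ord x`, that is, `ord Bᵢ / (b - i) ≤ ord x`. As `Bᵢ W ^ (b - i)` belongs to the
elimination algebra, the order of its image along the arc is at most `α₀ = ord x`.

On the other hand `r ≤ ord G` means that `G` lies in the subalgebra of all `∑ aₙ Wⁿ` with
`ν(aₙ) ≥ r n`, so the order of the algebra generated by two graded algebras is the minimum of their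
orders. Adjoining `t ^ α₀ W`, whose order is `α₀`, therefore changes nothing.
-/

section OrderOfReesAlgebras

variable {R : Type*} [CommRing R]

/-- The subalgebra of `R[W]` of all `∑ aₙ Wⁿ` with `r n ≤ v aₙ` for every `n`. Containment in it
is how lower bounds on the order of a Rees algebra are checked on generators. -/
def slopeSubalgebra (v : AddValuation R ℝ≥0∞) (r : ℝ≥0∞) : Subalgebra R R[X] where
  carrier := {p | ∀ n : ℕ, r * n ≤ v (p.coeff n)}
  add_mem' {p q} hp hq n := by
    rw [coeff_add]
    exact v.map_le_add (hp n) (hq n)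
  mul_mem' {p q} hp hq n := by
    rw [coeff_mul]
    refine v.map_le_sum fun ij hij => ?_
    rw [v.map_mul, ← Finset.HasAntidiagonal.mem_antidiagonal.mp hij, Nat.cast_add, mul_add]
    exact add_le_add (hp _) (hq _)
  algebraMap_mem' a n := by rcases n with _ | n <;> simp

theorem C_mul_X_pow_mem_slopeSubalgebra_iff {v : AddValuation R ℝ≥0∞} {r : ℝ≥0∞} {a : R} {n : ℕ} :
    C a * X ^ n ∈ slopeSubalgebra v r ↔ r * n ≤ v a := by
  refine ⟨fun h => by simpa using h n, fun h i => ?_⟩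
  rw [coeff_C_mul_X_pow]
  split_ifs with hi
  · rwa [hi]
  · simp

theorem graded_adjoin {s : Set R[X]} (hs : ∀ p ∈ s, ∃ a n, p = C a * X ^ n) :
    Graded (Algebra.adjoin R s) := by
  intro p hp
  induction hp using Algebra.adjoin_induction with
  | mem p hp =>
    intro n
    obtain ⟨a, l, rfl⟩ := hs p hp
    rw [coeff_C_mul_X_pow]
    split_ifs with hn
    · exact hn ▸ Algebra.subset_adjoin hp
    · simp
  | algebraMap a =>
    rintro (_ | n)
    · simpa using Subalgebra.algebraMap_mem (Algebra.adjoin R s) a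
    · simp
  | add p q _ _ hp hq =>
    intro n
    rw [coeff_add, C_add, add_mul]
    exact add_mem (hp n) (hq n)
  | mul p q _ _ hp hq =>
    intro n
    rw [coeff_mul, map_sum, Finset.sum_mul]
    refine sum_mem fun ij hij => ?_
    rw [← Finset.HasAntidiagonal.mem_antidiagonal.mp hij, C_mul, pow_add, mul_mul_mul_comm]
    exact mul_mem (hp _) (hq _)

theorem graded_arcImage {S : Type*} [CommRing S] (ψ : S → R) (G : Subalgebra S S[X]) :
    Graded (arcImage ψ G) :=
  graded_adjoin fun _ ⟨g, l, _, _, hp⟩ => ⟨ψ g, l, hp⟩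

theorem reesOrder_anti (m : Ideal R) {G H : Subalgebra R R[X]} (h : G ≤ H) :
    reesOrder m H ≤ reesOrder m G :=
  sInf_le_sInf fun _ ⟨a, n, ha, hn, hmem, hq⟩ => ⟨a, n, ha, hn, h hmem, hq⟩

theorem reesOrder_le_div {m : Ideal R} {G : Subalgebra R R[X]} {a : R} {n : ℕ} (ha : a ≠ 0)
    (hn : 1 ≤ n) (hmem : C a * X ^ n ∈ G) : reesOrder m G ≤ adicOrder m a / n :=
  sInf_le ⟨a, n, ha, hn, hmem, rfl⟩

variable {m : Ideal R} {v : AddValuation R ℝ≥0∞}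

-- `hv` excludes `0`, where `adicOrder` is `sSup univ = 0` while a valuation is `⊤`.
theorem le_reesOrder_of_le_slopeSubalgebra (hv : ∀ a ≠ 0, v a = adicOrder m a)
    {G : Subalgebra R R[X]} {r : ℝ≥0∞} (h : G ≤ slopeSubalgebra v r) : r ≤ reesOrder m G := by
  refine le_sInf ?_
  rintro _ ⟨a, n, ha, hn, hmem, rfl⟩
  have hslope : r * n ≤ v a := C_mul_X_pow_mem_slopeSubalgebra_iff.mp (h hmem)
  rw [hv a ha] at hslope
  have hn0 : (n : ℝ≥0∞) ≠ 0 := Nat.cast_ne_zero.mpr (by lia)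
  exact (ENNReal.le_div_iff_mul_le (.inl hn0) (.inl (ENNReal.natCast_ne_top n))).mpr hslope

theorem Graded.le_reesOrder_iff (hv : ∀ a ≠ 0, v a = adicOrder m a)
    {G : Subalgebra R R[X]} (hG : Graded G) {r : ℝ≥0∞} :
    r ≤ reesOrder m G ↔ G ≤ slopeSubalgebra v r := by
  refine ⟨fun hr p hp n => ?_, le_reesOrder_of_le_slopeSubalgebra hv⟩
  rcases Nat.eq_zero_or_pos n with rfl | hn
  · simp
  by_cases ha : p.coeff n = 0
  · simp [ha]
  rw [hv _ ha]
  exact ENNReal.mul_le_of_le_div (hr.trans (reesOrder_le_div ha hn (hG p hp n)))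

theorem reesOrder_sup (hv : ∀ a ≠ 0, v a = adicOrder m a) {G H : Subalgebra R R[X]}
    (hG : Graded G) (hH : Graded H) :
    reesOrder m (G ⊔ H) = min (reesOrder m G) (reesOrder m H) := by
  refine le_antisymm
    (le_min (reesOrder_anti m le_sup_left) (reesOrder_anti m le_sup_right)) ?_
  exact le_reesOrder_of_le_slopeSubalgebra hv <| sup_le
    ((hG.le_reesOrder_iff hv).mp (min_le_left _ _)) ((hH.le_reesOrder_iff hv).mp (min_le_right _ _))

theorem le_reesOrder_adjoin_C_mul_X (hv : ∀ a ≠ 0, v a = adicOrder m a) (a : R) :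
    v a ≤ reesOrder m (Algebra.adjoin R {C a * X}) := by
  refine le_reesOrder_of_le_slopeSubalgebra hv (Algebra.adjoin_singleton_le ?_)
  simpa using C_mul_X_pow_mem_slopeSubalgebra_iff (n := 1) |>.mpr (by simp)

end OrderOfReesAlgebras

section NewtonPolygon

variable {R : Type*} [CommRing R]

theorem exists_map_le_of_add_sum_eq_zero {Γ ι : Type*} [LinearOrderedAddCommMonoidWithTop Γ]
    (v : AddValuation R Γ) {a : R} (ha : v a ≠ ⊤) {s : Finset ι} {f : ι → R}
    (h : a + ∑ i ∈ s, f i = 0) : ∃ i ∈ s, v (f i) ≤ v a := by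
  by_contra! hlt
  have hsum : v a < v (∑ i ∈ s, f i) := v.map_lt_sum ha hlt
  rw [← neg_eq_of_add_eq_zero_right h, v.map_neg] at hsum
  exact hsum.false

theorem exists_map_coeff_div_le_map_root (v : AddValuation R ℝ≥0∞) {x : R} (hx : v x ≠ ⊤)
    {b : ℕ} {s : Finset ℕ} (hs : ∀ i ∈ s, i < b) {c : ℕ → R}
    (h : x ^ b + ∑ i ∈ s, c i * x ^ i = 0) :
    ∃ i ∈ s, c i ≠ 0 ∧ v (c i) / (b - i : ℕ) ≤ v x := by
  have hpow : v (x ^ b) ≠ ⊤ := by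
    rw [v.map_pow, nsmul_eq_mul]
    exact ENNReal.mul_ne_top (ENNReal.natCast_ne_top b) hx
  obtain ⟨i, hi, hle⟩ := exists_map_le_of_add_sum_eq_zero v hpow h
  refine ⟨i, hi, ?_, ENNReal.div_le_of_le_mul' ?_⟩
  · intro hc
    rw [hc, zero_mul, v.map_zero, top_le_iff] at hle
    exact hpow hle
  · have hxi : v (x ^ i) ≠ ⊤ := by
      rw [v.map_pow, nsmul_eq_mul]
      exact ENNReal.mul_ne_top (ENNReal.natCast_ne_top i) hx
    rw [← Nat.sub_add_cancel (hs i hi).le, pow_add, v.map_mul, v.map_mul,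
      ENNReal.add_le_add_iff_right hxi, v.map_pow, nsmul_eq_mul] at hle
    exact hle

end NewtonPolygon

section TAdicOrder

theorem adicOrder_span_singleton {R : Type*} [CommRing R] {p a : R} (h : FiniteMultiplicity p a) :
    adicOrder (Ideal.span {p}) a = multiplicity p a := by
  have hset : {n | a ∈ Ideal.span {p} ^ n} = Set.Iic (multiplicity p a) := by
    ext n
    rw [Set.mem_ofPred_eq, Ideal.span_singleton_pow, Ideal.mem_span_singleton,
      h.pow_dvd_iff_le_multiplicity, Set.mem_Iic]
  rw [adicOrder, hset, csSup_Iic]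

/-- The `p`-adic valuation of a domain, with values in `[0, ∞]` so that it can be compared with
the rational slopes `ν(f)/n`. -/
def primeAddValuation {R : Type*} [CommRing R] [IsDomain R] {p : R} (hp : Prime p) :
    AddValuation R ℝ≥0∞ :=
  (multiplicity_addValuation hp).map ENat.toENNRealRingHom.toAddMonoidHom rfl
    ENat.toENNReal_mono

theorem primeAddValuation_apply {R : Type*} [CommRing R] [IsDomain R] {p : R} (hp : Prime p)
    (a : R) : primeAddValuation hp a = (emultiplicity p a : ℝ≥0∞) :=
  rfl

theorem primeAddValuation_eq_adicOrder {R : Type*} [CommRing R] [IsDomain R] [WfDvdMonoid R]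
    {p : R} (hp : Prime p) {a : R} (ha : a ≠ 0) :
    primeAddValuation hp a = adicOrder (Ideal.span {p}) a := by
  have hfin : FiniteMultiplicity p a := .of_prime_left hp ha
  rw [adicOrder_span_singleton hfin, primeAddValuation_apply, hfin.emultiplicity_eq_multiplicity,
    ENat.toENNReal_coe]

theorem primeAddValuation_pow_self {R : Type*} [CommRing R] [IsDomain R] {p : R}
    (hp : Prime p) (n : ℕ) : primeAddValuation hp (p ^ n) = n := by
  rw [primeAddValuation_apply, emultiplicity_pow_self_of_prime hp, ENat.toENNReal_coe]

theorem primeAddValuation_X_eq_tOrd {K : Type*} [Field K] {g : PowerSeries K} (hg : g ≠ 0) :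
    primeAddValuation PowerSeries.X_prime g = tOrd g :=
  primeAddValuation_eq_adicOrder _ hg

end TAdicOrder

section EliminationAlgebra

theorem subset_diffClosure {k R ι : Type*} [CommRing k] [CommRing R] [Algebra k R]
    (D : ι → Derivation k R R) (M : Set R[X]) : M ⊆ diffClosure D M :=
  fun _ hp => Algebra.mem_sInf.mpr fun _ hG => hG.1 hp

theorem hypContact_eq_arcImage_sup {k S K : Type} [Field k] {d : ℕ} [CommRing S] [Algebra k S]
    [Field K] [Algebra k K] (D : Fin d → Derivation k S S) (b : ℕ) (Bc : ℕ → S)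
    (φ : S[X] →ₐ[k] PowerSeries K) :
    hypContact k d S D b Bc φ =
      arcImage (fun s => φ (C s)) (hypElim k d S D b Bc) ⊔
        Algebra.adjoin (PowerSeries K) {C (PowerSeries.X ^ tOrd (φ X)) * X} := by
  rw [hypContact, Set.insert_eq, Algebra.adjoin_union, sup_comm]
  rfl

theorem C_mul_X_pow_mem_hypElim {k S : Type} [Field k] {d : ℕ} [CommRing S] [Algebra k S]
    (D : Fin d → Derivation k S S) {b : ℕ} (Bc : ℕ → S) {i : ℕ} (hi : i ≤ b - 2) :
    C (Bc i) * X ^ (b - i) ∈ hypElim k d S D b Bc :=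
  subset_diffClosure D _ ⟨i, hi, rfl⟩

end EliminationAlgebra

theorem contact_order_eq_projected_contact_order_general {S R : Type*} [CommRing S] [CommRing R]
    {m : Ideal R} {v : AddValuation R ℝ≥0∞} (hv : ∀ a ≠ 0, v a = adicOrder m a)
    {G : Subalgebra S S[X]} {b : ℕ} (hb : 2 ≤ b) {B : ℕ → S}
    (hG : ∀ i ≤ b - 2, C (B i) * X ^ (b - i) ∈ G)
    {φ : S[X] →+* R} (hφ : φ (minPolyOf b B) = 0) (hx : φ X ≠ 0)
    {a : R} (ha : v a = adicOrder m (φ X)) :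
    (∃ i ≤ b - 2, φ (C (B i)) ≠ 0 ∧
      (adicOrder m (φ (C (B i))) : ℝ≥0∞) / (b - i : ℕ) ≤ adicOrder m (φ X)) ∧
    reesOrder m (arcImage (fun s => φ (C s)) G ⊔ Algebra.adjoin R {C a * X}) =
      reesOrder m (arcImage (fun s => φ (C s)) G) := by
  have hroot : φ X ^ b + ∑ i ∈ Finset.range (b - 1), φ (C (B i)) * φ X ^ i = 0 := by
    simpa [minPolyOf] using hφ
  have hφX : v (φ X) ≠ ⊤ := by
    rw [hv _ hx]
    exact ENNReal.natCast_ne_top _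
  obtain ⟨i, hi, hBi, hle⟩ := exists_map_coeff_div_le_map_root v hφX
    (fun i hi => (Finset.mem_range.mp hi).trans_le (Nat.sub_le b 1)) hroot
  have hib : i ≤ b - 2 := Nat.le_pred_of_lt (Finset.mem_range.mp hi)
  rw [hv _ hBi, hv _ hx] at hle
  refine ⟨⟨i, hib, hBi, hle⟩, ?_⟩
  rw [reesOrder_sup hv (graded_arcImage _ G) (graded_adjoin fun p hp => ⟨a, 1, by simpa using hp⟩),
    min_eq_left_iff]
  calc reesOrder m (arcImage (fun s => φ (C s)) G)
      ≤ adicOrder m (φ (C (B i))) / (b - i : ℕ) :=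
        reesOrder_le_div hBi (by lia) (Algebra.subset_adjoin ⟨B i, b - i, hG i hib, hBi, rfl⟩)
    _ ≤ v a := hle.trans_eq ha.symm
    _ ≤ reesOrder m (Algebra.adjoin R {C a * X}) := le_reesOrder_adjoin_C_mul_X hv a

/-- (Lemma `lemma:ord_amalgama_final`.)  For an arc `φ` in the hypersurface `X = V(f)`
through the closed point, with `φ(x) = u_0 t^{α_0}`, one has
`α_0 ≥ min {ord_t(φ(B_i))/(b-i) : φ(B_i) ≠ 0}` (and this set of indices is nonempty);
consequently the order of the contact algebra of `φ` equals the order of the contact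
algebra of its projection `φ^{(d)}` to `S`. -/
theorem contact_order_eq_projected_contact_order
    (k : Type) [Field k] [CharZero k] (d : ℕ) (hd : 1 ≤ d)
    (S : Type) [CommRing S] [IsDomain S] [Algebra (MvPolynomial (Fin d) k) S]
    [Algebra k S] [IsScalarTower k (MvPolynomial (Fin d) k) S] [IsSLoc k d S]
    (D : Fin d → Derivation k S S)
    (hD : ∀ i j : Fin d, D j (zvar k d S i) = if i = j then 1 else 0)
    (b : ℕ) (hb : 2 ≤ b) (Bc : ℕ → S)
    (hmem : ∀ i ≤ b - 2, Bc i ∈ (mS k d S) ^ (b - i))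
    (hnz : ∃ i ≤ b - 2, Bc i ≠ 0)
    (K : Type) [Field K] [Algebra k K]
    (φ : Polynomial S →ₐ[k] PowerSeries K) (hφ : IsHypArc k d S b Bc φ) :
    (∃ i, i ≤ b - 2 ∧ φ (Polynomial.C (Bc i)) ≠ 0 ∧
      (tOrd (φ (Polynomial.C (Bc i))) : ℝ≥0∞) / ((b - i : ℕ) : ℝ≥0∞) ≤
        (tOrd (φ (Polynomial.X : Polynomial S)) : ℝ≥0∞)) ∧
    reesOrder (tId K) (hypContact k d S D b Bc φ) =
      reesOrder (tId K)
        (arcImage (fun s : S => φ (Polynomial.C s)) (hypElim k d S D b Bc)) := by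
  rw [hypContact_eq_arcImage_sup]
  exact contact_order_eq_projected_contact_order_general (m := tId K)
    (fun _ => primeAddValuation_X_eq_tOrd) hb (fun _ => C_mul_X_pow_mem_hypElim D Bc)
    (φ := (φ : S[X] →+* PowerSeries K)) hφ.1 hφ.2.2.2.1 (primeAddValuation_pow_self _ _)

end NashMult
end
end

section
/- Let k be a field, (R,m) a Noetherian local k-algebra, K a field extension of k, and ψ : R → K[[t]] a k-algebra homomorphism with ψ(m) ⊆ (t) and ψ(m) ≠ 0; let ord(ψ) denote the largest integer n with ψ(m) ⊆ (t^n). For a Rees algebra G over R, let ψ(G) denote the Rees algebra over K[[t]] generated by all elements ψ(g)W^l, where gW^l runs over the homogeneous elements of G with ψ(g) ≠ 0. Then ord(ψ(G)) ≥ ord(G) · ord(ψ), where ord(ψ(G)) is the order at the closed point (t) of K[[t]] and ord(G) the order at the closed point of R. -/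
/-!
For a real slope `c ≥ 0`, the modules `I ^ ⌈c * n⌉ W ^ n` add up to an algebra, because rounding
up is subadditive. An algebra has order at least `c` exactly when its homogeneous elements lie in
this one. An arc of order `h` carries `m ^ ⌈c * n⌉` into `(t) ^ (h * ⌈c * n⌉)`, hence the
homogeneous generators of the image into the algebra of slope `c * h`, and with them the image.
-/

open Polynomial
open scoped ENNReal

noncomputable section

namespace NashMult

open scoped NNReal

theorem le_sSup_iff_mem {S : Set ℕ} (hS : IsLowerSet S) (hne : S.Nonempty) (hb : BddAbove S)
    {n : ℕ} : n ≤ sSup S ↔ n ∈ S :=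
  ⟨fun h ↦ hS h (Nat.sSup_mem hne hb), fun h ↦ le_csSup hb h⟩

section Order

variable {R A : Type*} [CommRing R] [CommRing A]

theorem bddAbove_setOf_mem_pow {I : Ideal R} [IsHausdorff I R] {f : R} (hf : f ≠ 0) :
    BddAbove {n : ℕ | f ∈ I ^ n} := by
  obtain ⟨N, hN⟩ : ∃ N : ℕ, f ∉ I ^ N := by
    contrapose! hf
    exact IsHausdorff.haus ‹_› f fun n ↦ by simpa [SModEq.zero] using hf n
  refine ⟨N, fun n hn ↦ ?_⟩
  by_contra! h
  exact hN (Ideal.pow_le_pow_right h.le hn)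

theorem le_adicOrder_iff {I : Ideal R} [IsHausdorff I R] {f : R} (hf : f ≠ 0) {n : ℕ} :
    n ≤ adicOrder I f ↔ f ∈ I ^ n :=
  le_sSup_iff_mem (S := {n | f ∈ I ^ n}) (fun _ _ h hb ↦ Ideal.pow_le_pow_right h hb)
    ⟨0, by simp⟩ (bddAbove_setOf_mem_pow hf)

theorem le_homOrd_iff {m : Ideal R} {J : Ideal A} [IsHausdorff J A] {ψ : R → A}
    (hψ : ∃ s ∈ m, ψ s ≠ 0) {n : ℕ} : n ≤ homOrd m J ψ ↔ ∀ s ∈ m, ψ s ∈ J ^ n := by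
  obtain ⟨s, hs, hs0⟩ := hψ
  exact le_sSup_iff_mem (S := {n | ∀ s ∈ m, ψ s ∈ J ^ n})
    (fun _ _ h hb x hx ↦ Ideal.pow_le_pow_right h (hb x hx)) ⟨0, by simp⟩
    ((bddAbove_setOf_mem_pow hs0).mono fun _ hn ↦ hn s hs)

theorem coe_le_adicOrder_div_iff {I : Ideal R} [IsHausdorff I R] {f : R} (hf : f ≠ 0) {n : ℕ}
    (hn : n ≠ 0) {c : ℝ≥0} : (c : ℝ≥0∞) ≤ adicOrder I f / n ↔ f ∈ I ^ ⌈c * n⌉₊ := by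
  rw [← le_adicOrder_iff hf, Nat.ceil_le,
    ENNReal.le_div_iff_mul_le (.inl (by exact_mod_cast hn)) (.inl (ENNReal.natCast_ne_top n))]
  norm_cast

theorem coe_le_reesOrder_iff {I : Ideal R} [IsHausdorff I R] {G : Subalgebra R R[X]} {c : ℝ≥0} :
    (c : ℝ≥0∞) ≤ reesOrder I G ↔ ∀ (f : R) (n : ℕ), C f * X ^ n ∈ G → f ∈ I ^ ⌈c * n⌉₊ := by
  refine ⟨fun h f n hfG ↦ ?_, fun h ↦ le_sInf ?_⟩
  · rcases eq_or_ne f 0 with rfl | hf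
    · exact zero_mem _
    rcases eq_or_ne n 0 with rfl | hn
    · simp
    · exact (coe_le_adicOrder_div_iff hf hn).1
        (h.trans (sInf_le ⟨f, n, hf, Nat.one_le_iff_ne_zero.2 hn, hfG, rfl⟩))
  · rintro _ ⟨f, n, hf, hn, hfG, rfl⟩
    exact (coe_le_adicOrder_div_iff hf (Nat.one_le_iff_ne_zero.1 hn)).2 (h f n hfG)

end Order

section SlopeReesAlgebra

variable {R A : Type*} [CommRing R] [CommRing A]

theorem mul_mem_pow_ceil_add {I : Ideal R} {x y : R} {a b : ℝ≥0} (hx : x ∈ I ^ ⌈a⌉₊)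
    (hy : y ∈ I ^ ⌈b⌉₊) : x * y ∈ I ^ ⌈a + b⌉₊ := by
  refine Ideal.pow_le_pow_right (Nat.ceil_add_le a b) ?_
  rw [pow_add]
  exact Ideal.mul_mem_mul hx hy

/-- The Rees algebra of slope `c`, namely `⊕ I ^ ⌈c * n⌉ W ^ n`, as a subalgebra of `R[W]`; it
contains the homogeneous elements `f W ^ n` with `ν(f) ≥ c * n`. The slope is a finite
nonnegative real, so an infinite order is handled through all its finite lower bounds. -/
def slopeReesAlgebra (I : Ideal R) (c : ℝ≥0) : Subalgebra R R[X] where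
  carrier := {p | ∀ n : ℕ, p.coeff n ∈ I ^ ⌈c * n⌉₊}
  add_mem' hp hq n := by
    rw [coeff_add]
    exact add_mem (hp n) (hq n)
  mul_mem' {p q} hp hq n := by
    rw [coeff_mul]
    refine sum_mem fun ij hij ↦ ?_
    rw [← Finset.HasAntidiagonal.mem_antidiagonal.1 hij, Nat.cast_add, mul_add]
    exact mul_mem_pow_ceil_add (hp ij.1) (hq ij.2)
  algebraMap_mem' r n := by
    rw [Polynomial.algebraMap_apply, coeff_C]
    split_ifs with hn
    · simp [hn]
    · exact zero_mem _

theorem C_mul_X_pow_mem_slopeReesAlgebra_iff {I : Ideal R} {c : ℝ≥0} {f : R} {n : ℕ} :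
    C f * X ^ n ∈ slopeReesAlgebra I c ↔ f ∈ I ^ ⌈c * n⌉₊ := by
  refine ⟨fun h ↦ by simpa using h n, fun h i ↦ ?_⟩
  rw [coeff_C_mul_X_pow]
  split_ifs with hi
  · rwa [hi]
  · exact zero_mem _

theorem coe_le_reesOrder_of_le_slopeReesAlgebra {I : Ideal R} [IsHausdorff I R]
    {G : Subalgebra R R[X]} {c : ℝ≥0} (hG : G ≤ slopeReesAlgebra I c) :
    (c : ℝ≥0∞) ≤ reesOrder I G :=
  coe_le_reesOrder_iff.2 fun _ _ hf ↦ C_mul_X_pow_mem_slopeReesAlgebra_iff.1 (hG hf)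

theorem map_mem_pow_mul {m : Ideal R} {J : Ideal A} {ψ : R →+* A} {h k : ℕ}
    (hψ : ∀ s ∈ m, ψ s ∈ J ^ h) {g : R} (hg : g ∈ m ^ k) : ψ g ∈ J ^ (h * k) := by
  have hmap : m.map ψ ≤ J ^ h := Ideal.map_le_iff_le_comap.2 hψ
  rw [pow_mul]
  refine Ideal.pow_right_mono hmap k ?_
  rw [← Ideal.map_pow]
  exact Ideal.mem_map_of_mem ψ hg

theorem map_mem_pow_ceil_mul {m : Ideal R} {J : Ideal A} {ψ : R →+* A} {h : ℕ} {a : ℝ≥0}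
    (hψ : ∀ s ∈ m, ψ s ∈ J ^ h) {g : R} (hg : g ∈ m ^ ⌈a⌉₊) : ψ g ∈ J ^ ⌈h * a⌉₊ := by
  refine Ideal.pow_le_pow_right (Nat.ceil_le.2 ?_) (map_mem_pow_mul hψ hg)
  push_cast
  gcongr
  exact Nat.le_ceil a

theorem arcImage_le_slopeReesAlgebra {m : Ideal R} {J : Ideal A} {ψ : R →+* A}
    {G : Subalgebra R R[X]} {h : ℕ} {c : ℝ≥0} (hψ : ∀ s ∈ m, ψ s ∈ J ^ h)
    (hG : ∀ (g : R) (l : ℕ), C g * X ^ l ∈ G → g ∈ m ^ ⌈c * l⌉₊) :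
    arcImage ψ G ≤ slopeReesAlgebra J (c * h) := by
  refine Algebra.adjoin_le ?_
  rintro _ ⟨g, l, hg, -, rfl⟩
  rw [SetLike.mem_coe, C_mul_X_pow_mem_slopeReesAlgebra_iff, mul_comm c, mul_assoc]
  exact map_mem_pow_ceil_mul hψ (hG g l hg)

end SlopeReesAlgebra

instance isHausdorff_tId (K : Type*) [Field K] : IsHausdorff (tId K) (PowerSeries K) := by
  rw [tId, ← PowerSeries.maximalIdeal_eq_span_X]
  infer_instance

theorem arc_image_order_ge_general {R A : Type*} [CommRing R] [CommRing A] (m : Ideal R)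
    (J : Ideal A) [IsHausdorff m R] [IsHausdorff J A] (ψ : R →+* A) (hψ : ∃ s ∈ m, ψ s ≠ 0)
    (G : Subalgebra R R[X]) :
    reesOrder m G * (homOrd m J ψ : ℝ≥0∞) ≤ reesOrder J (arcImage ψ G) := by
  refine ENNReal.mul_le_of_forall_lt fun c hc b hb ↦ ?_
  lift c to ℝ≥0 using hc.ne_top
  calc (c : ℝ≥0∞) * b
    _ ≤ c * homOrd m J ψ := by gcongr
    _ = ↑(c * homOrd m J ψ : ℝ≥0) := by push_cast; rfl
    _ ≤ reesOrder J (arcImage ψ G) :=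
      coe_le_reesOrder_of_le_slopeReesAlgebra <|
        arcImage_le_slopeReesAlgebra ((le_homOrd_iff hψ).1 le_rfl) (coe_le_reesOrder_iff.1 hc.le)

/-- (Lemma `lema:arcos_diagonales`, general form.)  Let `(R, m)` be a Noetherian local
`k`-algebra and `ψ : R → K⟦t⟧` a `k`-algebra homomorphism with `0 ≠ ψ(m) ⊆ (t)`.  For any
Rees algebra `G` over `R`, the order at the closed point `(t)` of the image Rees algebra
`ψ(G)` satisfies `ord(ψ(G)) ≥ ord(G) · ord(ψ)`. -/
theorem arc_image_order_ge
    (k : Type) [Field k]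
    (R : Type) [CommRing R] [IsNoetherianRing R] [IsLocalRing R] [Algebra k R]
    (K : Type) [Field K] [Algebra k K]
    (ψ : R →ₐ[k] PowerSeries K)
    (hψmem : ∀ s ∈ IsLocalRing.maximalIdeal R, ψ s ∈ tId K)
    (hψne : ∃ s ∈ IsLocalRing.maximalIdeal R, ψ s ≠ 0)
    (G : Subalgebra R (Polynomial R)) (hG : IsReesAlgebra G) :
    reesOrder (IsLocalRing.maximalIdeal R) G *
        (homOrd (IsLocalRing.maximalIdeal R) (tId K) ψ : ℝ≥0∞) ≤
      reesOrder (tId K) (arcImage (⇑ψ) G) := by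
  exact arc_image_order_ge_general _ (tId K) (ψ : R →+* PowerSeries K) hψne G

end NashMult
end
end
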